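/- For p ≥ 2 and n ≥ 0, the natural representation of SO(p+1, ℝ) on the space of spherical harmonics of degree n on S^p (i.e., restrictions to S^p of homogeneous harmonic polynomials of degree n in ℝ^{p+1}) is irreducible. -/

import Mathlib

open MvPolynomial

/-- The Laplacian on polynomials in `p+1` variables, as a linear map. -/
noncomputable def polyLaplacian (p : ℕ) :
    MvPolynomial (Fin (p + 1)) ℝ →ₗ[ℝ] MvPolynomial (Fin (p + 1)) ℝ :=
  ∑ j : Fin (p + 1),
    ((pderiv j).toLinearMap ∘ₗ (pderiv j).toLinearMap)

/-- The space of homogeneous harmonic polynomials of degree `n` in `p+1` real variables; its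
restriction to the unit sphere `S^p` is the space of spherical harmonics of degree `n` (the
restriction map is injective). -/
noncomputable def harmonicHomogeneous (p n : ℕ) :
    Submodule ℝ (MvPolynomial (Fin (p + 1)) ℝ) :=
  LinearMap.ker (polyLaplacian p) ⊓ homogeneousSubmodule (Fin (p + 1)) ℝ n

/-- The natural action of a matrix `M` on polynomials on `ℝ^{p+1}`, by linear substitution of
the variables: `(M • f)(x) = f(Mᵀ x)`; for `M` in the orthogonal group this is the natural
(unitary) action `f ↦ f ∘ M⁻¹` up to relabeling by the inverse. -/
noncomputable def matrixAct (p : ℕ) (M : Matrix (Fin (p + 1)) (Fin (p + 1)) ℝ) :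
    MvPolynomial (Fin (p + 1)) ℝ →ₐ[ℝ] MvPolynomial (Fin (p + 1)) ℝ :=
  aeval (fun i => ∑ j : Fin (p + 1), C (M i j) * X j)

/-! The Fischer inner product `⟨f, g⟩ = (f(∂) g)(0)` makes multiplication by `X i` adjoint to
`∂ᵢ`, hence multiplication by `∑ Xᵢ²` adjoint to the Laplacian and the substitution of `M` adjoint
to that of `Mᵀ`. A nonzero invariant space `W` of harmonic polynomials contains a nonzero zonal
one, namely the element of `W` representing evaluation at the north pole `(1, 0, …, 0)`. A zonal
harmonic polynomial `f` vanishing at the north pole is zero, by induction on the degree: `∂₀ f` is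
of the same kind by Euler's identity, hence zero, so `f` is a multiple of a positive power of
`∑ Xᵢ² - X₀²`, which makes it orthogonal to itself. Thus the zonal harmonics of a given degree form
a line, two nonzero invariant spaces always intersect, and `W` has no nonzero invariant orthogonal
complement. -/

section FischerForm

open Nat

variable {σ R : Type*} [CommSemiring R]

/-- The Fischer inner product of polynomials, in which distinct monomials are orthogonal and
`X ^ α` has squared norm `α!`; equivalently `(f, g) ↦ (f(∂) g)(0)`. It is the invariant inner
product used to take orthogonal complements of subrepresentations. -/
noncomputable def fischerForm (σ R : Type*) [CommSemiring R] :
    LinearMap.BilinForm R (MvPolynomial σ R) :=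
  (basisMonomials σ R).constr R fun α => (α.prod fun _ k => (k ! : R)) • lcoeff R α

lemma fischerForm_monomial_left (α : σ →₀ ℕ) (a : R) (g : MvPolynomial σ R) :
    fischerForm σ R (monomial α a) g = a * ((α.prod fun _ k => (k ! : R)) * coeff α g) := by
  have h : monomial α a = a • basisMonomials σ R α := by simp [smul_monomial]
  rw [h, map_smul, fischerForm, Module.Basis.constr_basis]
  simp

lemma fischerForm_apply (f g : MvPolynomial σ R) :
    fischerForm σ R f g =
      ∑ α ∈ f.support, coeff α f * ((α.prod fun _ k => (k ! : R)) * coeff α g) := by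
  conv_lhs => rw [f.as_sum, map_sum, LinearMap.sum_apply]
  exact Finset.sum_congr rfl fun α _ => fischerForm_monomial_left α _ g

lemma fischerForm_isSymm : (fischerForm σ R).IsSymm where
  eq f g := by
    classical
    have h (f g : MvPolynomial σ R) : fischerForm σ R f g =
        ∑ α ∈ f.support ∪ g.support, coeff α f * ((α.prod fun _ k => (k ! : R)) * coeff α g) := by
      rw [fischerForm_apply]
      refine Finset.sum_subset Finset.subset_union_left fun α _ hα => ?_
      rw [notMem_support_iff.1 hα, zero_mul]
    rw [h f g, h g f, Finset.union_comm]
    exact Finset.sum_congr rfl fun α _ => by ring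

lemma fischerForm_X_mul_left (i : σ) (f g : MvPolynomial σ R) :
    fischerForm σ R (X i * f) g = fischerForm σ R f (pderiv i g) := by
  induction f using MvPolynomial.induction_on' with
  | add f₁ f₂ h₁ h₂ => simp only [mul_add, map_add, LinearMap.add_apply, h₁, h₂]
  | monomial α a =>
    have hfact : ((α + Finsupp.single i 1).prod fun _ k => (k ! : R)) =
        (α i + 1) * α.prod fun _ k => (k ! : R) := by
      rw [← Finsupp.mul_prod_erase' _ i _ (by simp), ← Finsupp.mul_prod_erase' α i _ (by simp)]
      simp [Nat.factorial_succ, mul_assoc]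
    rw [mul_comm, ← pow_one (X i), ← monomial_add_single, fischerForm_monomial_left,
      fischerForm_monomial_left, coeff_pderiv, hfact]
    ring

lemma fischerForm_psum_two_mul_left [Fintype σ] (f g : MvPolynomial σ R) :
    fischerForm σ R (psum σ R 2 * f) g = fischerForm σ R f (∑ i, pderiv i (pderiv i g)) := by
  simp only [psum, Finset.sum_mul, map_sum, LinearMap.sum_apply, sq, mul_assoc,
    fischerForm_X_mul_left]

end FischerForm

section PositiveDefinite

variable {σ K : Type*}

lemma fischerForm_self_eq_zero [CommRing K] [LinearOrder K] [IsStrictOrderedRing K]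
    {f : MvPolynomial σ K} : fischerForm σ K f f = 0 ↔ f = 0 := by
  refine ⟨fun h => ?_, fun h => by simp [h]⟩
  have hpos : ∀ α : σ →₀ ℕ, 0 < α.prod fun _ k => (k.factorial : K) := fun α =>
    Finset.prod_pos fun i _ => by positivity
  rw [fischerForm_apply, Finset.sum_eq_zero_iff_of_nonneg fun α _ => by
    rw [mul_left_comm]; exact mul_nonneg (hpos α).le (mul_self_nonneg _)] at h
  ext α
  by_contra hα
  simpa [(hpos α).ne', show coeff α f ≠ 0 from hα] using h α (mem_support_iff.2 hα)

lemma disjoint_fischerForm_orthogonal [CommRing K] [LinearOrder K] [IsStrictOrderedRing K]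
    (W : Submodule K (MvPolynomial σ K)) :
    Disjoint W ((fischerForm σ K).orthogonal W) :=
  Submodule.disjoint_def.2 fun f hf hf' => fischerForm_self_eq_zero.1 (hf' f hf)

variable [Field K] [LinearOrder K] [IsStrictOrderedRing K]

lemma exists_mem_forall_fischerForm_eq (W : Submodule K (MvPolynomial σ K))
    [FiniteDimensional K W] (φ : Module.Dual K (MvPolynomial σ K)) :
    ∃ z ∈ W, ∀ f ∈ W, fischerForm σ K z f = φ f := by
  have hinj : Function.Injective ((fischerForm σ K).restrict W) :=
    (injective_iff_map_eq_zero _).2 fun f hf =>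
      Subtype.ext (fischerForm_self_eq_zero.1 (LinearMap.congr_fun hf f))
  obtain ⟨z, hz⟩ := (LinearMap.injective_iff_surjective_of_finrank_eq_finrank
    Subspace.dual_finrank_eq.symm).1 hinj (φ.domRestrict W)
  exact ⟨z, z.2, fun f hf => LinearMap.congr_fun hz ⟨f, hf⟩⟩

lemma le_of_inf_fischerForm_orthogonal_eq_bot {W H : Submodule K (MvPolynomial σ K)}
    [FiniteDimensional K W] (hWH : W ≤ H) (h : H ⊓ (fischerForm σ K).orthogonal W = ⊥) :
    H ≤ W := by
  intro f hf
  obtain ⟨z, hz, hzf⟩ := exists_mem_forall_fischerForm_eq W (fischerForm σ K f)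
  have hmem : f - z ∈ H ⊓ (fischerForm σ K).orthogonal W :=
    ⟨H.sub_mem hf (hWH hz), fun w hw => by
      rw [← fischerForm_isSymm.eq]
      simp [hzf w hw]⟩
  rw [h, Submodule.mem_bot, sub_eq_zero] at hmem
  exact hmem ▸ hz

end PositiveDefinite

section Polynomial

variable {σ R : Type*} [CommSemiring R]

lemma derivation_aeval [Fintype σ] {A : Type*} [CommSemiring A] [Algebra R A]
    (D : Derivation R A A) (g : σ → A) (f : MvPolynomial σ R) :
    D (aeval g f) = ∑ i, aeval g (pderiv i f) * D (g i) := by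
  classical
  induction f using MvPolynomial.induction_on with
  | C a => simp
  | add f₁ f₂ h₁ h₂ => simp only [map_add, h₁, h₂, add_mul, Finset.sum_add_distrib]
  | mul_X f j hf =>
    simp [hf, pderiv_X, Pi.single_apply, apply_ite, ite_mul, Finset.sum_add_distrib, add_mul,
      Finset.mul_sum, mul_assoc]

lemma eval_smul_of_isHomogeneous {n : ℕ} {f : MvPolynomial σ R} (hf : f.IsHomogeneous n)
    (t : R) (x : σ → R) : eval (t • x) f = t ^ n * eval x f := by
  rw [eval_eq, eval_eq, Finset.mul_sum]
  refine Finset.sum_congr rfl fun d hd => ?_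
  simp only [Pi.smul_apply, smul_eq_mul, mul_pow, Finset.prod_mul_distrib,
    Finset.prod_pow_eq_pow_sum, hf.degree_eq_sum_deg_support hd]
  ring

lemma notMem_vars_of_pderiv_eq_zero [NoZeroDivisors R] [CharZero R] {i : σ}
    {f : MvPolynomial σ R} (hf : pderiv i f = 0) : i ∉ f.vars := by
  rw [mem_vars_iff_mem_support]
  rintro ⟨α, hα, hi⟩
  have hle : Finsupp.single i 1 ≤ α :=
    Finsupp.single_le_iff.2 (Nat.one_le_iff_ne_zero.2 (Finsupp.mem_support_iff.1 hi))
  have h := congrArg (coeff (α - Finsupp.single i 1)) hf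
  rw [coeff_pderiv, tsub_add_cancel_of_le hle, coeff_zero, mul_eq_zero] at h
  exact h.elim (mem_support_iff.1 hα) (Nat.cast_add_one_ne_zero _)

lemma eval_eq_of_pderiv_eq_zero [NoZeroDivisors R] [CharZero R] {i : σ} {f : MvPolynomial σ R}
    (hf : pderiv i f = 0) {x y : σ → R} (hxy : ∀ j ≠ i, x j = y j) : eval x f = eval y f :=
  eval₂Hom_congr' rfl
    (fun j hj _ => hxy j (ne_of_mem_of_not_mem hj (notMem_vars_of_pderiv_eq_zero hf))) rfl

end Polynomial

section Householder

open Matrix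

variable {n K : Type*} [Fintype n] [DecidableEq n] [Field K]

/-- The matrix of the orthogonal reflection in the hyperplane `vᗮ`, used to build rotations as
products of two reflections. For `v ⬝ᵥ v = 0` the division by zero makes it the identity. -/
def householder (v : n → K) : Matrix n n K :=
  1 - (2 / (v ⬝ᵥ v)) • vecMulVec v v

lemma householder_mulVec (v x : n → K) :
    householder v *ᵥ x = x - (2 / (v ⬝ᵥ v) * (v ⬝ᵥ x)) • v := by
  rw [householder, sub_mulVec, one_mulVec, smul_mulVec, vecMulVec_mulVec, op_smul_eq_smul,
    smul_smul]

lemma householder_mulVec_of_dotProduct_eq_zero {v x : n → K} (h : v ⬝ᵥ x = 0) :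
    householder v *ᵥ x = x := by
  simp [householder_mulVec, h]

lemma householder_sub_mulVec {x y : n → K} (hxy : x ⬝ᵥ x = y ⬝ᵥ y)
    (h : (x - y) ⬝ᵥ (x - y) ≠ 0) : householder (x - y) *ᵥ x = y := by
  have hcoef : 2 / ((x - y) ⬝ᵥ (x - y)) * ((x - y) ⬝ᵥ x) = 1 := by
    rw [div_mul_eq_mul_div, div_eq_one_iff_eq h]
    simp only [sub_dotProduct, dotProduct_sub, dotProduct_comm y x, ← hxy]
    ring
  rw [householder_mulVec, hcoef, one_smul, sub_sub_cancel]

lemma householder_mul_self (v : n → K) : householder v * householder v = 1 := by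
  by_cases hv : v ⬝ᵥ v = 0
  · simp [householder, hv]
  refine ext_of_mulVec_single fun i => ?_
  rw [← mulVec_mulVec, householder_mulVec, householder_mulVec, one_mulVec, dotProduct_sub,
    dotProduct_smul, sub_sub, ← add_smul, smul_eq_mul, sub_eq_self]
  convert! zero_smul K v
  field_simp
  ring

lemma householder_mem_orthogonalGroup (v : n → K) : householder v ∈ orthogonalGroup n K := by
  have htranspose : (householder v)ᵀ = householder v := by
    simp [householder, transpose_vecMulVec]
  rw [mem_orthogonalGroup_iff, htranspose, householder_mul_self]

lemma det_householder {v : n → K} (hv : v ⬝ᵥ v ≠ 0) : (householder v).det = -1 := by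
  have h : householder v =
      1 + replicateCol Unit (-(2 / (v ⬝ᵥ v)) • v) * replicateRow Unit v := by
    rw [← vecMulVec_eq, smul_vecMulVec, neg_smul, householder, sub_eq_add_neg]
  rw [h, det_one_add_replicateCol_mul_replicateRow, dotProduct_smul, smul_eq_mul, neg_mul,
    div_mul_cancel₀ _ hv]
  norm_num

lemma householder_mul_householder_mem_specialOrthogonalGroup {u v : n → K} (hu : u ⬝ᵥ u ≠ 0)
    (hv : v ⬝ᵥ v ≠ 0) : householder u * householder v ∈ specialOrthogonalGroup n K := by
  refine mem_specialOrthogonalGroup_iff.2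
    ⟨mul_mem (householder_mem_orthogonalGroup u) (householder_mem_orthogonalGroup v), ?_⟩
  rw [det_mul, det_householder hu, det_householder hv, neg_one_mul, neg_neg]

end Householder

section Rotations

open Matrix

variable {n K : Type*} [Fintype n]

lemma sq_le_dotProduct_self [CommRing K] [LinearOrder K] [IsStrictOrderedRing K] (x : n → K)
    (i : n) : x i ^ 2 ≤ x ⬝ᵥ x := by
  rw [sq]
  exact Finset.single_le_sum (fun j _ => mul_self_nonneg (x j)) (Finset.mem_univ i)

lemma exists_ne_zero_dotProduct_eq_zero_and_eq_zero [Field K] (hn : 2 < Fintype.card n)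
    (x y : n → K) : ∃ v : n → K, v ≠ 0 ∧ v ⬝ᵥ x = 0 ∧ v ⬝ᵥ y = 0 := by
  have hker : LinearMap.ker (Matrix.of ![x, y]).mulVecLin ≠ ⊥ :=
    LinearMap.ker_ne_bot_of_finrank_lt (by simpa using hn)
  obtain ⟨v, hv, hv0⟩ := (Submodule.ne_bot_iff _).1 hker
  refine ⟨v, hv0, ?_, ?_⟩ <;> rw [dotProduct_comm]
  exacts [congrFun hv 0, congrFun hv 1]

variable [DecidableEq n]

lemma transpose_mem_specialOrthogonalGroup [CommRing K] {M : Matrix n n K}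
    (hM : M ∈ specialOrthogonalGroup n K) : Mᵀ ∈ specialOrthogonalGroup n K := by
  rw [mem_specialOrthogonalGroup_iff, mem_orthogonalGroup_iff'] at hM
  rw [mem_specialOrthogonalGroup_iff, mem_orthogonalGroup_iff, transpose_transpose, det_transpose]
  exact hM

lemma transpose_mulVec_eq_self [CommRing K] {M : Matrix n n K}
    (hM : M ∈ specialOrthogonalGroup n K) {e : n → K} (he : M *ᵥ e = e) : Mᵀ *ᵥ e = e := by
  have h := (mem_orthogonalGroup_iff' n K).1 (mem_specialOrthogonalGroup_iff.1 hM).1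
  conv_lhs => rw [← he, mulVec_mulVec, h, one_mulVec]

lemma exists_mem_specialOrthogonalGroup_mulVec_eq [Field K] [LinearOrder K]
    [IsStrictOrderedRing K] (hn : 2 < Fintype.card n) {x y e : n → K}
    (hxy : x ⬝ᵥ x = y ⬝ᵥ y) (he : e ⬝ᵥ x = e ⬝ᵥ y) :
    ∃ M ∈ specialOrthogonalGroup n K, M *ᵥ x = y ∧ M *ᵥ e = e := by
  obtain rfl | hne := eq_or_ne x y
  · exact ⟨1, one_mem _, one_mulVec x, one_mulVec e⟩
  have hsub : (x - y) ⬝ᵥ (x - y) ≠ 0 := dotProduct_self_eq_zero.not.2 (sub_ne_zero.2 hne)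
  have hsub_e : (x - y) ⬝ᵥ e = 0 := by rw [dotProduct_comm, dotProduct_sub, he, sub_self]
  obtain ⟨v, hv, hvy, hve⟩ := exists_ne_zero_dotProduct_eq_zero_and_eq_zero hn y e
  refine ⟨householder v * householder (x - y),
    householder_mul_householder_mem_specialOrthogonalGroup (dotProduct_self_eq_zero.not.2 hv) hsub,
    ?_, ?_⟩ <;> rw [← mulVec_mulVec]
  · rw [householder_sub_mulVec hxy hsub, householder_mulVec_of_dotProduct_eq_zero hvy]
  · rw [householder_mulVec_of_dotProduct_eq_zero hsub_e,
      householder_mulVec_of_dotProduct_eq_zero hve]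

end Rotations

open Matrix

section MatrixAct

variable {p n : ℕ} (M : Matrix (Fin (p + 1)) (Fin (p + 1)) ℝ)
  {f : MvPolynomial (Fin (p + 1)) ℝ}

lemma eval_matrixAct (x : Fin (p + 1) → ℝ) (f : MvPolynomial (Fin (p + 1)) ℝ) :
    eval x (matrixAct p M f) = eval (M *ᵥ x) f := by
  rw [matrixAct, ← aeval_eq_eval, ← aeval_eq_eval, ← AlgHom.comp_apply, comp_aeval]
  congr 2
  ext i
  simp [mulVec, dotProduct]

lemma pderiv_matrixAct (j : Fin (p + 1)) (f : MvPolynomial (Fin (p + 1)) ℝ) :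
    pderiv j (matrixAct p M f) = ∑ i, M i j • matrixAct p M (pderiv i f) := by
  simp only [matrixAct, derivation_aeval, map_sum, pderiv_C_mul, pderiv_X, Pi.single_apply,
    mul_ite, mul_one, mul_zero, Finset.sum_ite_eq', Finset.mem_univ, if_true, smul_eq_C_mul]
  exact Finset.sum_congr rfl fun i _ => mul_comm _ _

lemma isHomogeneous_matrixAct (hf : f.IsHomogeneous n) : (matrixAct p M f).IsHomogeneous n := by
  have hlin (i : Fin (p + 1)) : (∑ j, C (M i j) * X j).IsHomogeneous 1 :=
    .sum _ _ _ fun j _ => isHomogeneous_C_mul_X _ _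
  simpa [matrixAct] using hf.aeval _ hlin

lemma fischerForm_matrixAct_left (f g : MvPolynomial (Fin (p + 1)) ℝ) :
    fischerForm _ ℝ (matrixAct p M f) g = fischerForm _ ℝ f (matrixAct p Mᵀ g) := by
  induction f using MvPolynomial.induction_on generalizing g with
  | C a =>
    have h (g : MvPolynomial (Fin (p + 1)) ℝ) : fischerForm _ ℝ (C a) g = a * eval 0 g := by
      rw [← monomial_zero', fischerForm_monomial_left, Finsupp.prod_zero_index, one_mul,
        ← constantCoeff_eq, eval_zero]
    rw [show matrixAct p M (C a) = C a by simp [matrixAct], h, h, eval_matrixAct, mulVec_zero]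
  | add f₁ f₂ h₁ h₂ => simp only [map_add, LinearMap.add_apply, h₁, h₂]
  | mul_X f i hf =>
    have hX : matrixAct p M (X i) = ∑ j, M i j • X j := by simp [matrixAct, smul_eq_C_mul]
    simp only [map_mul, mul_comm _ (X i), hX, Finset.sum_mul, smul_mul_assoc,
      map_sum, map_smul, LinearMap.sum_apply, LinearMap.smul_apply,
      fischerForm_X_mul_left, hf, pderiv_matrixAct, transpose_apply]

end MatrixAct

section Harmonic

variable {p n : ℕ} {f : MvPolynomial (Fin (p + 1)) ℝ}

lemma fischerForm_psum_two_mul_left_eq_polyLaplacian (g f : MvPolynomial (Fin (p + 1)) ℝ) :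
    fischerForm _ ℝ (psum _ ℝ 2 * g) f = fischerForm _ ℝ g (polyLaplacian p f) := by
  simp [fischerForm_psum_two_mul_left, polyLaplacian]

lemma polyLaplacian_eq_zero_iff :
    polyLaplacian p f = 0 ↔ ∀ g, fischerForm _ ℝ (psum _ ℝ 2 * g) f = 0 := by
  simp only [fischerForm_psum_two_mul_left_eq_polyLaplacian]
  exact ⟨fun h g => by rw [h, map_zero], fun h => fischerForm_self_eq_zero.1 (h _)⟩

lemma eval_psum_two (x : Fin (p + 1) → ℝ) : eval x (psum _ ℝ 2) = x ⬝ᵥ x := by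
  simp [psum, dotProduct, sq]

lemma matrixAct_psum_two {M : Matrix (Fin (p + 1)) (Fin (p + 1)) ℝ}
    (hM : M ∈ orthogonalGroup (Fin (p + 1)) ℝ) :
    matrixAct p M (psum _ ℝ 2) = psum _ ℝ 2 := by
  refine MvPolynomial.funext fun x => ?_
  rw [eval_matrixAct, eval_psum_two, eval_psum_two, dotProduct_mulVec, vecMul_mulVec,
    (mem_orthogonalGroup_iff' _ _).1 hM, vecMul_one]

lemma matrixAct_mem_harmonicHomogeneous {M : Matrix (Fin (p + 1)) (Fin (p + 1)) ℝ}
    (hM : M ∈ specialOrthogonalGroup (Fin (p + 1)) ℝ) (hf : f ∈ harmonicHomogeneous p n) :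
    matrixAct p M f ∈ harmonicHomogeneous p n := by
  refine ⟨polyLaplacian_eq_zero_iff.2 fun g => ?_, isHomogeneous_matrixAct M hf.2⟩
  have hMt := (mem_specialOrthogonalGroup_iff.1 (transpose_mem_specialOrthogonalGroup hM)).1
  rw [← transpose_transpose M, ← fischerForm_matrixAct_left, map_mul, matrixAct_psum_two hMt]
  exact polyLaplacian_eq_zero_iff.1 hf.1 _

lemma pderiv_mem_harmonicHomogeneous (hf : f ∈ harmonicHomogeneous p n) (i : Fin (p + 1)) :
    pderiv i f ∈ harmonicHomogeneous p (n - 1) := by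
  refine ⟨polyLaplacian_eq_zero_iff.2 fun g => ?_, hf.2.pderiv⟩
  rw [← fischerForm_X_mul_left, mul_left_comm]
  exact polyLaplacian_eq_zero_iff.1 hf.1 _

lemma eq_zero_of_polyLaplacian_eq_zero_of_dvd (hf : polyLaplacian p f = 0) {i : Fin (p + 1)}
    (hi : pderiv i f = 0) (hdvd : psum _ ℝ 2 - X i ^ 2 ∣ f) : f = 0 := by
  obtain ⟨g, hg⟩ := hdvd
  have hX : fischerForm _ ℝ (X i ^ 2 * g) f = 0 := by
    rw [sq, mul_assoc, fischerForm_X_mul_left, hi, map_zero]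
  rw [← fischerForm_self_eq_zero]
  nth_rw 1 [hg]
  rw [sub_mul, map_sub, LinearMap.sub_apply, polyLaplacian_eq_zero_iff.1 hf, hX, sub_zero]

instance finiteDimensional_harmonicHomogeneous (p n : ℕ) :
    FiniteDimensional ℝ (harmonicHomogeneous p n) :=
  have : FiniteDimensional ℝ (homogeneousSubmodule (Fin (p + 1)) ℝ n) :=
    Module.Finite.iff_fg.2 (homogeneousSubmodule_fg _ _ n)
  Submodule.finiteDimensional_of_le inf_le_right

end Harmonic

section Zonal

variable {p n : ℕ} {f g : MvPolynomial (Fin (p + 1)) ℝ}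

/-- The point `(1, 0, …, 0)` of the sphere, whose stabilizer defines zonal polynomials. -/
def northPole (p : ℕ) : Fin (p + 1) → ℝ := Pi.single 0 1

lemma northPole_zero : northPole p 0 = 1 := Pi.single_eq_same 0 1

lemma northPole_dotProduct (x : Fin (p + 1) → ℝ) : northPole p ⬝ᵥ x = x 0 := by
  simp [northPole]

/-- Zonal polynomials: those fixed by every rotation fixing the north pole. They are
used to compare two subrepresentations. -/
def IsZonal (f : MvPolynomial (Fin (p + 1)) ℝ) : Prop :=
  ∀ M ∈ specialOrthogonalGroup (Fin (p + 1)) ℝ, M *ᵥ northPole p = northPole p →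
    matrixAct p M f = f

lemma IsZonal.sub (hf : IsZonal f) (hg : IsZonal g) : IsZonal (f - g) := fun M hM he => by
  rw [map_sub, hf M hM he, hg M hM he]

lemma IsZonal.smul (hf : IsZonal f) (c : ℝ) : IsZonal (c • f) := fun M hM he => by
  rw [map_smul, hf M hM he]

lemma IsZonal.pderiv_zero (hf : IsZonal f) : IsZonal (pderiv 0 f) := fun M hM he => by
  have hcol (i : Fin (p + 1)) : M i 0 = Pi.single (M := fun _ => ℝ) 0 1 i := by
    simpa [northPole] using congrFun he i
  have h := pderiv_matrixAct M 0 f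
  simpa [hf M hM he, hcol, Pi.single_apply] using h.symm

lemma IsZonal.eval_eq (hp : 2 ≤ p) (hf : IsZonal f) {x y : Fin (p + 1) → ℝ}
    (hxy : x ⬝ᵥ x = y ⬝ᵥ y) (h0 : x 0 = y 0) : eval x f = eval y f := by
  obtain ⟨M, hM, hMx, he⟩ := exists_mem_specialOrthogonalGroup_mulVec_eq (e := northPole p)
    (by simpa using hp) hxy (by simpa [northPole_dotProduct] using h0)
  rw [← hMx, ← eval_matrixAct, hf M hM he]

lemma IsZonal.eval_eq_sqrt_pow_mul (hp : 2 ≤ p) (hf : IsZonal f) (hhom : f.IsHomogeneous n)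
    (hd : pderiv 0 f = 0) {u : Fin (p + 1) → ℝ} (hu : u ⬝ᵥ u = 1) (hu0 : u 0 = 0)
    (x : Fin (p + 1) → ℝ) : eval x f = √(x ⬝ᵥ x - x 0 ^ 2) ^ n * eval u f := by
  set y := x - x 0 • northPole p with hy
  have hy0 : y 0 = 0 := by simp [hy, northPole]
  have hyy : y ⬝ᵥ y = x ⬝ᵥ x - x 0 ^ 2 := by
    simp only [hy, sub_dotProduct, dotProduct_sub, smul_dotProduct, dotProduct_smul,
      dotProduct_comm x (northPole p), northPole_dotProduct, northPole_zero, smul_eq_mul]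
    ring
  have hxy : eval x f = eval y f :=
    eval_eq_of_pderiv_eq_zero hd fun j hj => by simp [hy, northPole, hj]
  rw [hxy, ← hyy, ← eval_smul_of_isHomogeneous hhom]
  refine hf.eval_eq hp ?_ (by simp [hy0, hu0])
  rw [smul_dotProduct, dotProduct_smul, hu, smul_eq_mul, smul_eq_mul, mul_one,
    Real.mul_self_sqrt (hyy ▸ sub_nonneg.2 (sq_le_dotProduct_self x 0))]

lemma IsZonal.eq_zero_of_pderiv_zero (hp : 2 ≤ p) (hf : IsZonal f)
    (hH : f ∈ harmonicHomogeneous p (n + 1)) (hd : pderiv 0 f = 0) : f = 0 := by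
  have hlast : 0 ≠ Fin.last p := by
    rw [Ne, Fin.ext_iff, Fin.val_zero, Fin.val_last]
    lia
  obtain ⟨u, hu, hu0⟩ : ∃ u : Fin (p + 1) → ℝ, u ⬝ᵥ u = 1 ∧ u 0 = 0 :=
    ⟨Pi.single (Fin.last p) 1, by simp, Pi.single_eq_of_ne hlast 1⟩
  have hpow := hf.eval_eq_sqrt_pow_mul hp hH.2 hd hu hu0
  obtain hodd | heven := (n + 1).even_or_odd.symm
  · have hneg : eval (-u) f = -eval u f := by
      rw [← neg_one_smul ℝ u, eval_smul_of_isHomogeneous hH.2, hodd.neg_one_pow, neg_one_mul]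
    have hpos : eval (-u) f = eval u f := hf.eval_eq hp (by simp) (by simp [hu0])
    have hu_zero : eval u f = 0 := by linarith
    exact MvPolynomial.funext fun x => by rw [hpow, hu_zero, mul_zero, map_zero]
  · obtain ⟨m, hm⟩ := heven.two_dvd
    have hfm : f = (psum _ ℝ 2 - X 0 ^ 2) ^ m * C (eval u f) := by
      refine MvPolynomial.funext fun x => ?_
      rw [hpow x, hm, pow_mul,
        Real.sq_sqrt (sub_nonneg.2 (sq_le_dotProduct_self x 0))]
      simp [eval_psum_two]
    refine eq_zero_of_polyLaplacian_eq_zero_of_dvd hH.1 hd ?_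
    rw [hfm]
    exact (dvd_pow_self _ (by rintro rfl; simp at hm)).mul_right _

lemma eval_northPole_pderiv_zero (hf : f.IsHomogeneous n) :
    eval (northPole p) (pderiv 0 f) = n * eval (northPole p) f := by
  simpa [northPole, Pi.single_apply] using
    congrArg (eval (northPole p)) hf.sum_X_mul_pderiv

lemma IsZonal.eq_zero_of_eval_northPole (hp : 2 ≤ p) (hf : IsZonal f)
    (hH : f ∈ harmonicHomogeneous p n) (h0 : eval (northPole p) f = 0) : f = 0 := by
  induction n generalizing f with
  | zero =>
    have hC := totalDegree_eq_zero_iff_eq_C.1 ((totalDegree_zero_iff_isHomogeneous _).2 hH.2)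
    rw [hC] at h0 ⊢
    simpa using h0
  | succ n ih =>
    refine hf.eq_zero_of_pderiv_zero hp hH
      (ih hf.pderiv_zero (pderiv_mem_harmonicHomogeneous hH 0) ?_)
    rw [eval_northPole_pderiv_zero hH.2, h0, mul_zero]

lemma IsZonal.smul_eq_smul (hp : 2 ≤ p) (hf : IsZonal f) (hg : IsZonal g)
    (hfH : f ∈ harmonicHomogeneous p n) (hgH : g ∈ harmonicHomogeneous p n) :
    eval (northPole p) g • f = eval (northPole p) f • g := by
  refine sub_eq_zero.1 (((hf.smul _).sub (hg.smul _)).eq_zero_of_eval_northPole hp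
    (Submodule.sub_mem _ (Submodule.smul_mem _ _ hfH) (Submodule.smul_mem _ _ hgH)) ?_)
  rw [map_sub, smul_eval, smul_eval, mul_comm, sub_self]

end Zonal

section Invariant

variable {p n : ℕ} {W W' : Submodule ℝ (MvPolynomial (Fin (p + 1)) ℝ)}

/-- Subspaces of polynomials stable under the natural action of `SO(p + 1)`, i.e. its
subrepresentations. -/
def IsRotationInvariant (W : Submodule ℝ (MvPolynomial (Fin (p + 1)) ℝ)) : Prop :=
  ∀ M ∈ specialOrthogonalGroup (Fin (p + 1)) ℝ, ∀ f ∈ W, matrixAct p M f ∈ W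

lemma IsRotationInvariant.harmonicHomogeneous_inf_orthogonal (hinv : IsRotationInvariant W)
    (n : ℕ) : IsRotationInvariant (harmonicHomogeneous p n ⊓ (fischerForm _ ℝ).orthogonal W) :=
  fun M hM f hf => ⟨matrixAct_mem_harmonicHomogeneous hM hf.1, fun w hw => by
    rw [← transpose_transpose M, ← fischerForm_matrixAct_left]
    exact hf.2 _ (hinv _ (transpose_mem_specialOrthogonalGroup hM) w hw)⟩

lemma IsRotationInvariant.eq_bot_of_eval_northPole (hinv : IsRotationInvariant W) (hp : 2 ≤ p)
    (hW : W ≤ harmonicHomogeneous p n) (h : ∀ f ∈ W, eval (northPole p) f = 0) : W = ⊥ := by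
  refine (Submodule.eq_bot_iff W).2 fun f hf => MvPolynomial.funext fun x => ?_
  have hnorm : (√(x ⬝ᵥ x) • northPole p) ⬝ᵥ (√(x ⬝ᵥ x) • northPole p) = x ⬝ᵥ x := by
    rw [smul_dotProduct, dotProduct_smul, northPole_dotProduct, northPole_zero, smul_eq_mul,
      smul_eq_mul, mul_one]
    exact Real.mul_self_sqrt (dotProduct_self_star_nonneg x)
  obtain ⟨M, hM, hMx, -⟩ := exists_mem_specialOrthogonalGroup_mulVec_eq (e := 0)
    (by simpa using hp) hnorm (by simp)
  have hMf := hinv M hM f hf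
  rw [← hMx, ← eval_matrixAct, eval_smul_of_isHomogeneous (hW hMf).2, h _ hMf, mul_zero, map_zero]

lemma IsRotationInvariant.exists_isZonal (hinv : IsRotationInvariant W) (hp : 2 ≤ p)
    (hW : W ≤ harmonicHomogeneous p n) (hne : W ≠ ⊥) : ∃ z ∈ W, IsZonal z ∧ z ≠ 0 := by
  have : FiniteDimensional ℝ W := Submodule.finiteDimensional_of_le hW
  obtain ⟨z, hz, hrep⟩ := exists_mem_forall_fischerForm_eq W (aeval (northPole p)).toLinearMap
  replace hrep : ∀ f ∈ W, fischerForm _ ℝ z f = eval (northPole p) f := hrep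
  refine ⟨z, hz, fun M hM he => ?_, ?_⟩
  · have horth (f) (hf : f ∈ W) : fischerForm _ ℝ (matrixAct p M z - z) f = 0 := by
      rw [map_sub, LinearMap.sub_apply, fischerForm_matrixAct_left, hrep f hf,
        hrep _ (hinv _ (transpose_mem_specialOrthogonalGroup hM) f hf), eval_matrixAct,
        transpose_mulVec_eq_self hM he, sub_self]
    exact sub_eq_zero.1
      (fischerForm_self_eq_zero.1 (horth _ (W.sub_mem (hinv M hM z hz) hz)))
  · rintro rfl
    exact hne (hinv.eq_bot_of_eval_northPole hp hW fun f hf => by simp [← hrep f hf])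

lemma IsRotationInvariant.not_disjoint (hp : 2 ≤ p) (hinv : IsRotationInvariant W)
    (hinv' : IsRotationInvariant W') (hW : W ≤ harmonicHomogeneous p n)
    (hW' : W' ≤ harmonicHomogeneous p n) (hne : W ≠ ⊥) (hne' : W' ≠ ⊥) : ¬Disjoint W W' := by
  intro hdisj
  obtain ⟨z, hz, hz_zonal, hz0⟩ := hinv.exists_isZonal hp hW hne
  obtain ⟨y, hy, hy_zonal, hy0⟩ := hinv'.exists_isZonal hp hW' hne'
  have heq := hz_zonal.smul_eq_smul hp hy_zonal (hW hz) (hW' hy)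
  have hzero := Submodule.disjoint_def.1 hdisj _ (W.smul_mem _ hz)
    (heq ▸ W'.smul_mem (eval (northPole p) z) hy)
  exact hy0 (hy_zonal.eq_zero_of_eval_northPole hp (hW' hy)
    ((smul_eq_zero.1 hzero).resolve_right hz0))

end Invariant

/-- For `p ≥ 2` and any `n`, the natural representation of `SO(p+1, ℝ)` on the space of
spherical harmonics of degree `n` on `S^p` is irreducible: every invariant subspace is trivial
or everything. -/
theorem spherical_harmonics_irreducible (p n : ℕ) (hp : 2 ≤ p)
    (W : Submodule ℝ (MvPolynomial (Fin (p + 1)) ℝ))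
    (hW : W ≤ harmonicHomogeneous p n)
    (hinv : ∀ M ∈ Matrix.specialOrthogonalGroup (Fin (p + 1)) ℝ,
      ∀ f ∈ W, matrixAct p M f ∈ W) :
    W = ⊥ ∨ W = harmonicHomogeneous p n := by
  refine or_iff_not_imp_left.2 fun hne => hW.antisymm ?_
  have : FiniteDimensional ℝ W := Submodule.finiteDimensional_of_le hW
  have hinv' : IsRotationInvariant W := hinv
  refine le_of_inf_fischerForm_orthogonal_eq_bot hW (by_contra fun hne' => ?_)
  exact hinv'.not_disjoint hp (hinv'.harmonicHomogeneous_inf_orthogonal n) hW inf_le_left hne hne'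
    ((disjoint_fischerForm_orthogonal W).mono_right inf_le_right)
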